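/- For all s > 0, μ(s) ≥ −g·k + s·C₂, where C₂ := inf of E1(φ,ψ) over all admissible pairs (φ,ψ) with J(φ,ψ) = 1; moreover C₂ ≥ 0. -/

import Mathlib

open Set MeasureTheory intervalIntegral Filter Topology

noncomputable section

namespace RT

/-- The piecewise integral `∫_{-m}^0 + ∫_0^ℓ`. -/
def pwInt (m l : ℝ) (f : ℝ → ℝ) : ℝ :=
  (∫ x in (-m)..(0:ℝ), f x) + ∫ x in (0:ℝ)..l, f x

/-- `f` restricted to `[-m,0)` extends continuously to `[-m,0]`, and `f` restricted to
`(0,ℓ]` extends continuously to `[0,ℓ]`. -/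
def PiecewiseCont (m l : ℝ) (f : ℝ → ℝ) : Prop :=
  (∃ F : ℝ → ℝ, ContinuousOn F (Icc (-m) 0) ∧ EqOn f F (Ico (-m) 0)) ∧
  (∃ F : ℝ → ℝ, ContinuousOn F (Icc 0 l) ∧ EqOn f F (Ioc 0 l))

/-- A profile function: the restriction to `[-m,0)` extends continuously to `[-m,0]`, and
the function is continuous on `[0,ℓ]` (hence right-continuous at `0`). -/
def Profile (m l : ℝ) (f : ℝ → ℝ) : Prop :=
  (∃ F : ℝ → ℝ, ContinuousOn F (Icc (-m) 0) ∧ EqOn f F (Ico (-m) 0)) ∧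
  ContinuousOn f (Icc 0 l)

/-- The four steady-state profiles `ρ0, p, ε0, δ0` with their positivity assumptions. -/
def ProfilesHyp (m l : ℝ) (ρ0 p ε0 δ0 : ℝ → ℝ) : Prop :=
  Profile m l ρ0 ∧ Profile m l p ∧ Profile m l ε0 ∧ Profile m l δ0 ∧
  (∀ x ∈ Icc (-m) l, 0 < ρ0 x) ∧ (∀ x ∈ Icc (-m) l, 0 < p x) ∧
  (∀ x ∈ Icc (-m) l, 0 < ε0 x) ∧ (∀ x ∈ Icc (-m) l, 0 ≤ δ0 x)

/-- `f` is continuous on `[-m,ℓ]` and continuously differentiable on `[-m,0]` and on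
`[0,ℓ]`, with piecewise derivative `fd`. -/
def PiecewiseC1 (m l : ℝ) (f fd : ℝ → ℝ) : Prop :=
  ContinuousOn f (Icc (-m) l) ∧
  (∀ x ∈ Ico (-m) 0, HasDerivWithinAt f (fd x) (Icc (-m) 0) x) ∧
  (∀ x ∈ Ioc 0 l, HasDerivWithinAt f (fd x) (Icc 0 l) x) ∧
  PiecewiseCont m l fd

/-- An admissible pair `(φ,ψ)` with piecewise derivatives `(φd,ψd)`. -/
def Admissible (m l : ℝ) (φ ψ φd ψd : ℝ → ℝ) : Prop :=
  PiecewiseC1 m l φ φd ∧ PiecewiseC1 m l ψ ψd ∧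
  φ (-m) = 0 ∧ φ l = 0 ∧ ψ (-m) = 0 ∧ ψ l = 0

/-- The energy `E(φ,ψ;s)`. -/
def energyE (m l g σ k : ℝ) (ρ0 p ε0 δ0 : ℝ → ℝ) (φ ψ φd ψd : ℝ → ℝ) (s : ℝ) : ℝ :=
  σ * k ^ 2 / 2 * (ψ 0) ^ 2
  + (1 / 2) * pwInt m l (fun x =>
      (s * δ0 x + p x * ρ0 x) * (ψd x + k * φ x) ^ 2 - 2 * g * ρ0 x * k * φ x * ψ x)
  + (s / 2) * pwInt m l (fun x =>
      ε0 x * ((φd x - k * ψ x) ^ 2 + (ψd x - k * φ x) ^ 2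
        + (1 / 3) * (ψd x + k * φ x) ^ 2))

/-- The normalization functional `J(φ,ψ)`. -/
def energyJ (m l : ℝ) (ρ0 : ℝ → ℝ) (φ ψ : ℝ → ℝ) : ℝ :=
  (1 / 2) * pwInt m l (fun x => ρ0 x * ((φ x) ^ 2 + (ψ x) ^ 2))

/-- The viscous part `E1(φ,ψ)` of the energy. -/
def energyE1 (m l k : ℝ) (ε0 δ0 : ℝ → ℝ) (φ ψ φd ψd : ℝ → ℝ) : ℝ :=
  (1 / 2) * pwInt m l (fun x => (δ0 x + ε0 x / 3) * (ψd x + k * φ x) ^ 2)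
  + (1 / 2) * pwInt m l (fun x =>
      ε0 x * ((φd x - k * ψ x) ^ 2 + (ψd x - k * φ x) ^ 2))

/-- `μ(s)`: the infimum of `E(·,·;s)` over admissible pairs with `J = 1`. -/
def muInf (m l g σ k : ℝ) (ρ0 p ε0 δ0 : ℝ → ℝ) (s : ℝ) : ℝ :=
  sInf { e : ℝ | ∃ φ ψ φd ψd : ℝ → ℝ, Admissible m l φ ψ φd ψd ∧
    energyJ m l ρ0 φ ψ = 1 ∧ e = energyE m l g σ k ρ0 p ε0 δ0 φ ψ φd ψd s }

/-- The hydrostatic steady-state relation `ρ0' = -g ρ0 / p` on each piece. -/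
def Hydrostatic (m l g : ℝ) (ρ0 p : ℝ → ℝ) : Prop :=
  (∀ x ∈ Ico (-m) 0, HasDerivWithinAt ρ0 (-g * ρ0 x / p x) (Ico (-m) 0) x) ∧
  (∀ x ∈ Ioc 0 l, HasDerivWithinAt ρ0 (-g * ρ0 x / p x) (Ioc 0 l) x)

end RT

namespace RT

theorem PiecewiseCont.const (m l c : ℝ) : PiecewiseCont m l (fun _ => c) :=
  ⟨⟨fun _ => c, continuousOn_const, fun _ _ => rfl⟩, ⟨fun _ => c, continuousOn_const, fun _ _ => rfl⟩⟩

theorem PiecewiseCont.add {m l : ℝ} {f h : ℝ → ℝ} (hf : PiecewiseCont m l f)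
    (hh : PiecewiseCont m l h) : PiecewiseCont m l (fun x => f x + h x) := by
  obtain ⟨⟨F, hF, hfF⟩, ⟨F', hF', hfF'⟩⟩ := hf
  obtain ⟨⟨H, hH, hhH⟩, ⟨H', hH', hhH'⟩⟩ := hh
  exact ⟨⟨fun x => F x + H x, hF.add hH, fun x hx => by simp only [hfF hx, hhH hx]⟩,
    ⟨fun x => F' x + H' x, hF'.add hH', fun x hx => by simp only [hfF' hx, hhH' hx]⟩⟩

theorem PiecewiseCont.mul {m l : ℝ} {f h : ℝ → ℝ} (hf : PiecewiseCont m l f)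
    (hh : PiecewiseCont m l h) : PiecewiseCont m l (fun x => f x * h x) := by
  obtain ⟨⟨F, hF, hfF⟩, ⟨F', hF', hfF'⟩⟩ := hf
  obtain ⟨⟨H, hH, hhH⟩, ⟨H', hH', hhH'⟩⟩ := hh
  exact ⟨⟨fun x => F x * H x, hF.mul hH, fun x hx => by simp only [hfF hx, hhH hx]⟩,
    ⟨fun x => F' x * H' x, hF'.mul hH', fun x hx => by simp only [hfF' hx, hhH' hx]⟩⟩

theorem PiecewiseCont.sub {m l : ℝ} {f h : ℝ → ℝ} (hf : PiecewiseCont m l f)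
    (hh : PiecewiseCont m l h) : PiecewiseCont m l (fun x => f x - h x) := by
  have := hf.add ((PiecewiseCont.const m l (-1)).mul hh)
  convert this using 2
  ring

theorem PiecewiseCont.sq {m l : ℝ} {f : ℝ → ℝ} (hf : PiecewiseCont m l f) :
    PiecewiseCont m l (fun x => f x ^ 2) := by
  have := hf.mul hf
  convert this using 2
  ring

theorem Profile.pc {m l : ℝ} {f : ℝ → ℝ} (hf : Profile m l f) : PiecewiseCont m l f :=
  ⟨hf.1, ⟨f, hf.2, fun _ _ => rfl⟩⟩

theorem PiecewiseC1.pc {m l : ℝ} (hm : 0 < m) (hl : 0 < l) {f fd : ℝ → ℝ}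
    (hf : PiecewiseC1 m l f fd) : PiecewiseCont m l f :=
  ⟨⟨f, hf.1.mono (Icc_subset_Icc le_rfl hl.le), fun _ _ => rfl⟩,
    ⟨f, hf.1.mono (Icc_subset_Icc (by linarith) le_rfl), fun _ _ => rfl⟩⟩

theorem PiecewiseCont.int {m l : ℝ} (hm : 0 < m) (hl : 0 < l) {f : ℝ → ℝ}
    (hf : PiecewiseCont m l f) :
    IntervalIntegrable f volume (-m) 0 ∧ IntervalIntegrable f volume 0 l := by
  obtain ⟨⟨F, hF, hfF⟩, ⟨F', hF', hfF'⟩⟩ := hf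
  have hm' : -m ≤ 0 := by linarith
  constructor
  · have h1 : IntervalIntegrable F volume (-m) 0 :=
      ContinuousOn.intervalIntegrable (by rwa [uIcc_of_le hm'])
    rw [intervalIntegrable_iff_integrableOn_Ico_of_le hm'] at h1 ⊢
    exact h1.congr_fun hfF.symm measurableSet_Ico
  · have h1 : IntervalIntegrable F' volume 0 l :=
      ContinuousOn.intervalIntegrable (by rwa [uIcc_of_le hl.le])
    rw [intervalIntegrable_iff_integrableOn_Ioc_of_le hl.le] at h1 ⊢
    exact h1.congr_fun hfF'.symm measurableSet_Ioc

theorem pwInt_add {m l : ℝ} (hm : 0 < m) (hl : 0 < l) {f h : ℝ → ℝ}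
    (hf : PiecewiseCont m l f) (hh : PiecewiseCont m l h) :
    pwInt m l (fun x => f x + h x) = pwInt m l f + pwInt m l h := by
  unfold pwInt
  rw [intervalIntegral.integral_add (hf.int hm hl).1 (hh.int hm hl).1,
    intervalIntegral.integral_add (hf.int hm hl).2 (hh.int hm hl).2]
  ring

theorem pwInt_cmul (m l c : ℝ) (f : ℝ → ℝ) :
    pwInt m l (fun x => c * f x) = c * pwInt m l f := by
  unfold pwInt
  rw [intervalIntegral.integral_const_mul, intervalIntegral.integral_const_mul]
  ring

theorem pwInt_nonneg {m l : ℝ} (hm : 0 < m) (hl : 0 < l) {f : ℝ → ℝ}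
    (hf : ∀ x ∈ Icc (-m) l, 0 ≤ f x) : 0 ≤ pwInt m l f := by
  unfold pwInt
  apply add_nonneg
  · exact intervalIntegral.integral_nonneg (by linarith)
      (fun x hx => hf x ⟨hx.1, by linarith [hx.2]⟩)
  · exact intervalIntegral.integral_nonneg hl.le
      (fun x hx => hf x ⟨by linarith [hx.1], hx.2⟩)

theorem energyE1_nonneg {m l k : ℝ} {ρ0 p ε0 δ0 φ ψ φd ψd : ℝ → ℝ}
    (hm : 0 < m) (hl : 0 < l) (hprof : ProfilesHyp m l ρ0 p ε0 δ0) :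
    0 ≤ energyE1 m l k ε0 δ0 φ ψ φd ψd := by
  obtain ⟨-, -, -, -, -, -, hε, hδ⟩ := hprof
  unfold energyE1
  have h1 := pwInt_nonneg hm hl (f := fun x => (δ0 x + ε0 x / 3) * (ψd x + k * φ x) ^ 2)
    (fun x hx => by have := hε x hx; have := hδ x hx; positivity)
  have h2 := pwInt_nonneg hm hl (f := fun x =>
      ε0 x * ((φd x - k * ψ x) ^ 2 + (ψd x - k * φ x) ^ 2))
    (fun x hx => by have := hε x hx; positivity)
  linarith

theorem energyE_ge {m l g σ k s : ℝ} {ρ0 p ε0 δ0 φ ψ φd ψd : ℝ → ℝ}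
    (hm : 0 < m) (hl : 0 < l) (hg : 0 < g) (hσ : 0 ≤ σ) (hk : 0 < k)
    (hprof : ProfilesHyp m l ρ0 p ε0 δ0) (ha : Admissible m l φ ψ φd ψd)
    (hJ : energyJ m l ρ0 φ ψ = 1) :
    -g * k + s * energyE1 m l k ε0 δ0 φ ψ φd ψd
      ≤ energyE m l g σ k ρ0 p ε0 δ0 φ ψ φd ψd s := by
  obtain ⟨cρ, cp, cε, cδ, hρ, hp, hε, hδ⟩ := hprof
  replace cρ := cρ.pc
  replace cp := cp.pc
  replace cε := cε.pc
  replace cδ := cδ.pc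
  have cφ := ha.1.pc hm hl
  have cψ := ha.2.1.pc hm hl
  have cφd := ha.1.2.2.2
  have cψd := ha.2.1.2.2.2
  have K := PiecewiseCont.const m l
  have cq := (cψd.add ((K k).mul cφ)).sq
  have cA := cδ.mul cq
  have cB := (cp.mul cρ).mul cq
  have cC := cρ.mul (cφ.mul cψ)
  have cF := cε.mul cq
  have cD := cε.mul ((cφd.sub ((K k).mul cψ)).sq.add (cψd.sub ((K k).mul cφ)).sq)
  have cG := cρ.mul (cφ.sq.add cψ.sq)
  have e1 := pwInt_add hm hl (((K s).mul cA).add cB) ((K (-(2 * g * k))).mul cC)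
  rw [pwInt_add hm hl ((K s).mul cA) cB, pwInt_cmul, pwInt_cmul] at e1
  have e2 := pwInt_add hm hl cD ((K (1 / 3)).mul cF)
  rw [pwInt_cmul] at e2
  have e3 := pwInt_add hm hl cA ((K (1 / 3)).mul cF)
  rw [pwInt_cmul] at e3
  have e4 := pwInt_add hm hl cG ((K (-2)).mul cC)
  rw [pwInt_cmul] at e4
  have nB := pwInt_nonneg hm hl (f := fun x => p x * ρ0 x * (ψd x + k * φ x) ^ 2)
    (fun x hx => by have := hρ x hx; have := hp x hx; positivity)
  have n4 := pwInt_nonneg hm hl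
    (f := fun x => ρ0 x * (φ x ^ 2 + ψ x ^ 2) + -2 * (ρ0 x * (φ x * ψ x)))
    (fun x hx => by
      have := mul_nonneg (hρ x hx).le (sq_nonneg (φ x - ψ x))
      linarith)
  rw [e4] at n4
  have nσ : 0 ≤ σ * k ^ 2 / 2 * (ψ 0) ^ 2 := by positivity
  unfold energyJ at hJ
  unfold energyE energyE1
  have f1 : (fun x => (s * δ0 x + p x * ρ0 x) * (ψd x + k * φ x) ^ 2
      - 2 * g * ρ0 x * k * φ x * ψ x) = fun x => s * (δ0 x * (ψd x + k * φ x) ^ 2)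
      + p x * ρ0 x * (ψd x + k * φ x) ^ 2 + -(2 * g * k) * (ρ0 x * (φ x * ψ x)) := by
    funext x; ring
  have f2 : (fun x => ε0 x * ((φd x - k * ψ x) ^ 2 + (ψd x - k * φ x) ^ 2
        + (1 / 3) * (ψd x + k * φ x) ^ 2)) = fun x =>
      ε0 x * ((φd x - k * ψ x) ^ 2 + (ψd x - k * φ x) ^ 2)
        + 1 / 3 * (ε0 x * (ψd x + k * φ x) ^ 2) := by
    funext x; ring
  have f3 : (fun x => (δ0 x + ε0 x / 3) * (ψd x + k * φ x) ^ 2) = fun x =>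
      δ0 x * (ψd x + k * φ x) ^ 2 + 1 / 3 * (ε0 x * (ψd x + k * φ x) ^ 2) := by
    funext x; ring
  rw [f1, f2, f3, e1, e2, e3]
  have n5 := mul_nonneg (mul_pos hg hk).le n4
  generalize pwInt m l (fun x => ρ0 x * (φ x ^ 2 + ψ x ^ 2)) = G at *
  have hG : G = 2 := by linarith
  subst hG
  linarith

/-- The lower bound `μ(s) ≥ -g k + s C₂`, where `C₂` is the infimum of `E1` over the
normalized admissible set; moreover `C₂ ≥ 0`. -/
theorem muInf_linear_lower_bound (m l g σ k : ℝ) (ρ0 p ε0 δ0 : ℝ → ℝ)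
    (hm : 0 < m) (hl : 0 < l) (hg : 0 < g) (hσ : 0 ≤ σ) (hk : 0 < k)
    (hprof : ProfilesHyp m l ρ0 p ε0 δ0) :
    0 ≤ sInf { e : ℝ | ∃ φ ψ φd ψd : ℝ → ℝ, Admissible m l φ ψ φd ψd ∧
        energyJ m l ρ0 φ ψ = 1 ∧ e = energyE1 m l k ε0 δ0 φ ψ φd ψd } ∧
    ∀ s : ℝ, 0 < s →
      -g * k + s * sInf { e : ℝ | ∃ φ ψ φd ψd : ℝ → ℝ, Admissible m l φ ψ φd ψd ∧
          energyJ m l ρ0 φ ψ = 1 ∧ e = energyE1 m l k ε0 δ0 φ ψ φd ψd }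
        ≤ muInf m l g σ k ρ0 p ε0 δ0 s := by
  have hbdd : ∀ e ∈ { e : ℝ | ∃ φ ψ φd ψd : ℝ → ℝ, Admissible m l φ ψ φd ψd ∧
        energyJ m l ρ0 φ ψ = 1 ∧ e = energyE1 m l k ε0 δ0 φ ψ φd ψd }, 0 ≤ e := by
    rintro e ⟨φ, ψ, φd, ψd, -, -, rfl⟩
    exact energyE1_nonneg hm hl hprof
  refine ⟨Real.sInf_nonneg hbdd, fun s hs => ?_⟩
  unfold muInf
  by_cases hne : ∃ φ ψ φd ψd : ℝ → ℝ, Admissible m l φ ψ φd ψd ∧ energyJ m l ρ0 φ ψ = 1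
  · obtain ⟨φ, ψ, φd, ψd, ha, hJ⟩ := hne
    refine le_csInf ⟨_, φ, ψ, φd, ψd, ha, hJ, rfl⟩ ?_
    rintro e ⟨φ, ψ, φd, ψd, ha, hJ, rfl⟩
    refine le_trans ?_ (energyE_ge hm hl hg hσ hk hprof ha hJ)
    have := csInf_le ⟨0, hbdd⟩ ⟨φ, ψ, φd, ψd, ha, hJ, rfl⟩
    have := mul_le_mul_of_nonneg_left this hs.le
    linarith
  · have h1 : { e : ℝ | ∃ φ ψ φd ψd : ℝ → ℝ, Admissible m l φ ψ φd ψd ∧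
        energyJ m l ρ0 φ ψ = 1 ∧ e = energyE1 m l k ε0 δ0 φ ψ φd ψd } = ∅ := by
      ext e
      simp only [mem_setOf_eq, mem_empty_iff_false, iff_false]
      rintro ⟨φ, ψ, φd, ψd, ha, hJ, -⟩
      exact hne ⟨φ, ψ, φd, ψd, ha, hJ⟩
    have h2 : { e : ℝ | ∃ φ ψ φd ψd : ℝ → ℝ, Admissible m l φ ψ φd ψd ∧
        energyJ m l ρ0 φ ψ = 1 ∧ e = energyE m l g σ k ρ0 p ε0 δ0 φ ψ φd ψd s } = ∅ := by
      ext e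
      simp only [mem_setOf_eq, mem_empty_iff_false, iff_false]
      rintro ⟨φ, ψ, φd, ψd, ha, hJ, -⟩
      exact hne ⟨φ, ψ, φd, ψd, ha, hJ⟩
    rw [h1, h2, Real.sInf_empty]
    have := mul_pos hg hk
    linarith

end RT
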